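/- There exist C₀ > 0 and C₁ > 0 such that for every z ∈ K, every ζ' ∈ ℝ × ℝ^n and every t̂ ∈ ℝ × ℝ^n × ℝ with t̂_{ξd} > 0 and |t̂'| ≤ C₀ t̂_{ξd}, and for each k ∈ {1,2}: if m̂_k(z,ζ',t̂) = 0 (i.e. the quadratic X ↦ (X + i t̂_{ξd})² + m̂_k has a double root), then, denoting by k' the other index and taking any h' ∈ ℂ with h'² = m̂_{k'}(z,ζ',t̂) and Re h' ≥ 0, both roots ρ̂_{k',±} = −i t̂_{ξd} ± i h' of X ↦ (X + i t̂_{ξd})² + m̂_{k'} satisfy Im ρ̂_{k',±} ≤ −C₁ t̂_{ξd}. -/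

import Mathlib

/-- `m̂_k(z,ζ',t̂) = (-1)^k i (σ + i t̂_σ)² + r_z(ξ' + i t̂_{ξ'})`, where `r_z` is the
complex-bilinear extension of the quadratic form with coefficient matrix `R`. -/
noncomputable def mhat {n : ℕ} (R : Fin n → Fin n → ℝ) (k : ℕ)
    (σ : ℝ) (ξ : Fin n → ℝ) (tσ : ℝ) (tξ : Fin n → ℝ) : ℂ :=
  (-1 : ℂ) ^ k * Complex.I * ((σ : ℂ) + Complex.I * (tσ : ℂ)) ^ 2 +
    ∑ j, ∑ l, (R j l : ℂ) * ((ξ j : ℂ) + Complex.I * (tξ j : ℂ)) *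
      ((ξ l : ℂ) + Complex.I * (tξ l : ℂ))

/-- `μ̂_k = 4 t̂_{ξd}² Re m̂_k − 4 t̂_{ξd}⁴ + (Im m̂_k)²`. -/
noncomputable def muhat {n : ℕ} (R : Fin n → Fin n → ℝ) (k : ℕ)
    (σ : ℝ) (ξ : Fin n → ℝ) (tσ : ℝ) (tξ : Fin n → ℝ) (tξd : ℝ) : ℝ :=
  4 * tξd ^ 2 * (mhat R k σ ξ tσ tξ).re - 4 * tξd ^ 4 + (mhat R k σ ξ tσ tξ).im ^ 2

lemma quad_re {n : ℕ} (R : Fin n → Fin n → ℝ) (x t : Fin n → ℝ) :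
    (∑ j, ∑ l, (R j l : ℂ) * ((x j : ℂ) + Complex.I * (t j : ℂ)) *
      ((x l : ℂ) + Complex.I * (t l : ℂ))).re =
    (∑ j, ∑ l, R j l * x j * x l) - ∑ j, ∑ l, R j l * t j * t l := by
  simp only [Complex.re_sum, ← Finset.sum_sub_distrib]
  refine Finset.sum_congr rfl fun j _ => Finset.sum_congr rfl fun l _ => ?_
  simp

lemma quad_im {n : ℕ} (R : Fin n → Fin n → ℝ) (x t : Fin n → ℝ) :
    (∑ j, ∑ l, (R j l : ℂ) * ((x j : ℂ) + Complex.I * (t j : ℂ)) *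
      ((x l : ℂ) + Complex.I * (t l : ℂ))).im =
    ∑ j, ∑ l, R j l * (x j * t l + t j * x l) := by
  simp only [Complex.im_sum]
  refine Finset.sum_congr rfl fun j _ => Finset.sum_congr rfl fun l _ => ?_
  simp
  ring

lemma quad_polar {n : ℕ} (R : Fin n → Fin n → ℝ) (x t : Fin n → ℝ) (e : ℝ) (he : e ^ 2 = 1) :
    ∑ j, ∑ l, R j l * (x j + e * t j) * (x l + e * t l) =
    (∑ j, ∑ l, R j l * x j * x l) + (∑ j, ∑ l, R j l * t j * t l) +
      e * ∑ j, ∑ l, R j l * (x j * t l + t j * x l) := by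
  simp only [Finset.mul_sum, ← Finset.sum_add_distrib]
  refine Finset.sum_congr rfl fun j _ => Finset.sum_congr rfl fun l _ => ?_
  linear_combination R j l * t j * t l * he

lemma quad_bound {n : ℕ} (R : Fin n → Fin n → ℝ) (M : ℝ) (hM : ∀ j l, |R j l| ≤ M)
    (t : Fin n → ℝ) :
    ∑ j, ∑ l, R j l * t j * t l ≤ M * n * ∑ j, (t j) ^ 2 := by
  have h1 : ∑ j, ∑ l, R j l * t j * t l ≤
      ∑ j : Fin n, ∑ l : Fin n, (M / 2 * t j ^ 2 + M / 2 * t l ^ 2) := by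
    refine Finset.sum_le_sum fun j _ => Finset.sum_le_sum fun l _ => ?_
    have := abs_le.1 (hM j l)
    nlinarith [mul_nonneg (sub_nonneg.2 this.2) (sq_nonneg (t j + t l)),
      mul_nonneg (sub_nonneg.2 this.1) (sq_nonneg (t j - t l))]
  refine h1.trans (le_of_eq ?_)
  simp only [Finset.sum_add_distrib, Finset.sum_const, ← Finset.mul_sum, Finset.card_univ,
    Fintype.card_fin, nsmul_eq_mul]
  ring

lemma core {n : ℕ} (R : Fin n → Fin n → ℝ)
    (hpd : ∀ η : Fin n → ℝ, 0 ≤ ∑ j, ∑ l, R j l * η j * η l)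
    (σ tσ : ℝ) (ξ tξ : Fin n → ℝ) (s : ℝ) (hs : s = 1 ∨ s = -1) (w h' : ℂ)
    (hw : w = (σ : ℂ) + Complex.I * (tσ : ℂ))
    (h0 : (s : ℂ) * Complex.I * w ^ 2 + ∑ j, ∑ l, (R j l : ℂ) *
      ((ξ j : ℂ) + Complex.I * (tξ j : ℂ)) * ((ξ l : ℂ) + Complex.I * (tξ l : ℂ)) = 0)
    (h1 : h' ^ 2 = (-s : ℂ) * Complex.I * w ^ 2 + ∑ j, ∑ l, (R j l : ℂ) *
      ((ξ j : ℂ) + Complex.I * (tξ j : ℂ)) * ((ξ l : ℂ) + Complex.I * (tξ l : ℂ))) :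
    h'.re ^ 2 ≤ 14 * tσ ^ 2 + 8 * ∑ j, ∑ l, R j l * tξ j * tξ l := by
  have hre := congrArg Complex.re h0
  have him := congrArg Complex.im h0
  rw [Complex.add_re, quad_re] at hre
  rw [Complex.add_im, quad_im] at him
  have hp := hpd (fun j => ξ j + 1 * tξ j)
  have hm := hpd (fun j => ξ j + (-1) * tξ j)
  rw [quad_polar R ξ tξ 1 (by norm_num)] at hp
  rw [quad_polar R ξ tξ (-1) (by norm_num)] at hm
  have h2 : h' ^ 2 = -2 * s * Complex.I * w ^ 2 := by linear_combination h1 + h0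
  have hs2 : s ^ 2 = 1 := by rcases hs with h | h <;> rw [h] <;> norm_num
  have h3 := congrArg Complex.normSq h2
  have hws : Complex.normSq w = σ ^ 2 + tσ ^ 2 := by
    rw [hw, Complex.normSq_apply]; simp; ring
  simp only [map_mul, map_pow, hws, Complex.normSq_I, Complex.normSq_ofReal, map_neg,
    Complex.normSq_neg, Complex.normSq_ofNat] at h3
  have h4 : Complex.normSq h' = 2 * (σ ^ 2 + tσ ^ 2) := by
    have : Complex.normSq h' ^ 2 = (2 * (σ ^ 2 + tσ ^ 2)) ^ 2 := by
      rw [h3]; linear_combination 4 * (σ ^ 2 + tσ ^ 2) ^ 2 * hs2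
    exact (sq_eq_sq₀ (Complex.normSq_nonneg _) (by positivity)).1 this
  have h5 : h'.re ^ 2 ≤ 2 * (σ ^ 2 + tσ ^ 2) := by
    rw [← h4, Complex.normSq_apply]; nlinarith [sq_nonneg h'.im]
  subst hw
  simp [pow_two] at hre him
  generalize (∑ j, ∑ l, R j l * ξ j * ξ l) = a at *
  generalize (∑ j, ∑ l, R j l * tξ j * tξ l) = b at *
  generalize (∑ j, ∑ l, R j l * (ξ j * tξ l + tξ j * ξ l)) = d at *
  rcases hs with h | h <;> subst h <;>
    nlinarith [sq_nonneg (σ - 2 * tσ), sq_nonneg (σ + 2 * tσ)]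

/-- If `|t̂'| ≤ C₀ t̂_{ξd}` and `q̂_k` has a double root (`m̂_k = 0`), then both roots of the
other factor `q̂_{k'}` lie in the lower half-plane: `Im ρ̂_{k',±} ≤ −C₁ t̂_{ξd}`. -/
theorem stmt11 (n : ℕ) (K : Type*) [MetricSpace K] [CompactSpace K]
    (R : K → Fin n → Fin n → ℝ)
    (hRcont : ∀ j l, Continuous fun z => R z j l)
    (c : ℝ) (hc : 0 < c)
    (hpd : ∀ (z : K) (η : Fin n → ℝ), c * (∑ j, (η j) ^ 2) ≤ ∑ j, ∑ l, R z j l * η j * η l) :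
    ∃ C₀ > 0, ∃ C₁ > 0,
      ∀ (z : K) (σ : ℝ) (ξ : Fin n → ℝ) (tσ : ℝ) (tξ : Fin n → ℝ) (tξd : ℝ),
        0 < tξd →
        Real.sqrt (tσ ^ 2 + ∑ j, (tξ j) ^ 2) ≤ C₀ * tξd →
        ∀ k : ℕ, k = 1 ∨ k = 2 →
        mhat (R z) k σ ξ tσ tξ = 0 →
        ∀ h' : ℂ, h' ^ 2 = mhat (R z) (3 - k) σ ξ tσ tξ → 0 ≤ h'.re →
          (-Complex.I * (tξd : ℂ) + Complex.I * h').im ≤ -(C₁ * tξd) ∧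
          (-Complex.I * (tξd : ℂ) - Complex.I * h').im ≤ -(C₁ * tξd) := by
  choose B hB using fun j l => isCompact_univ.exists_bound_of_continuousOn
    (hRcont j l).continuousOn
  set M : ℝ := ∑ j, ∑ l, |B j l| with hM
  have hM0 : 0 ≤ M := Finset.sum_nonneg fun j _ => Finset.sum_nonneg fun l _ => abs_nonneg _
  have hRM : ∀ z j l, |R z j l| ≤ M := by
    intro z j l
    have e1 : |R z j l| ≤ |B j l| := (hB j l z (Set.mem_univ _)).trans (le_abs_self _)
    have e2 : |B j l| ≤ ∑ l, |B j l| :=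
      Finset.single_le_sum (f := fun l => |B j l|) (fun _ _ => abs_nonneg _) (Finset.mem_univ l)
    have e3 : ∑ l, |B j l| ≤ M :=
      Finset.single_le_sum (f := fun j => ∑ l, |B j l|)
        (fun _ _ => Finset.sum_nonneg fun _ _ => abs_nonneg _) (Finset.mem_univ j)
    linarith
  have hMn : 0 ≤ M * n := by positivity
  set L : ℝ := 14 + 8 * (M * n) with hL
  have hL14 : 14 ≤ L := by linarith
  have hLpos : 0 < L := by linarith
  refine ⟨1 / L, by positivity, 1 / 2, by norm_num, ?_⟩
  intro z σ ξ tσ tξ d hd ht k hk h0 h' h1 hh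
  have hpd0 : ∀ η : Fin n → ℝ, 0 ≤ ∑ j, ∑ l, R z j l * η j * η l := fun η =>
    le_trans (mul_nonneg hc.le (Finset.sum_nonneg fun _ _ => sq_nonneg _)) (hpd z η)
  have hcore : h'.re ^ 2 ≤ 14 * tσ ^ 2 + 8 * ∑ j, ∑ l, R z j l * tξ j * tξ l := by
    rcases hk with rfl | rfl
    · refine core (R z) hpd0 σ tσ ξ tξ (-1) (Or.inr rfl) _ h' rfl ?_ ?_
      · simpa [mhat] using h0
      · simpa [mhat] using h1
    · refine core (R z) hpd0 σ tσ ξ tξ 1 (Or.inl rfl) _ h' rfl ?_ ?_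
      · simpa [mhat] using h0
      · simpa [mhat] using h1
  have hq := quad_bound (R z) M (hRM z) tξ
  have hT : 0 ≤ ∑ j, (tξ j) ^ 2 := Finset.sum_nonneg fun _ _ => sq_nonneg _
  have ht2 := (Real.sqrt_le_left (by positivity)).1 ht
  generalize (∑ j, (tξ j) ^ 2) = T at *
  have e1 : h'.re ^ 2 ≤ L * (tσ ^ 2 + T) := by
    nlinarith [mul_nonneg hMn (sq_nonneg tσ)]
  have e2 : L * (tσ ^ 2 + T) ≤ L * (1 / L * d) ^ 2 := mul_le_mul_of_nonneg_left ht2 hLpos.le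
  have e3 : L * (1 / L * d) ^ 2 = 1 / L * d ^ 2 := by field_simp
  have e4 : 1 / L ≤ 1 / 4 := one_div_le_one_div_of_le (by norm_num) (by linarith)
  have e5 : h'.re ^ 2 ≤ (d / 2) ^ 2 := by nlinarith [sq_nonneg d]
  have e6 : h'.re ≤ d / 2 := by nlinarith
  constructor <;> simp <;> linarith
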